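/- Let H be a group, d : Fin n → ℕ with d i ≥ 1, and for each i : Fin n let u_i : H →* unitaryGroup (Fin (d i)) ℂ be an irreducible group homomorphism. If there exists a nonzero ψ : (∀ i, Fin (d i)) → ℂ with ∑_y (∏_i (u_i h) (x i) (y i)) · ψ(y) = ψ(x) for all h ∈ H and all x (i.e. the tensor product of the representations u_i contains a trivial subrepresentation), then R(d) ≥ 0. -/

import Mathlib

open scoped ComplexConjugate

noncomputable section

def rhoK {n : ℕ} (d : Fin n → ℕ) (ψ : (∀ i, Fin (d i)) → ℂ) (k : Fin n) :
    Matrix (Fin (d k)) (Fin (d k)) ℂ :=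
  Matrix.of fun j l =>
    ∑ x : ∀ i, Fin (d i), if x k = j then ψ x * conj (ψ (Function.update x k l)) else 0

def Normalized {n : ℕ} {d : Fin n → ℕ} (ψ : (∀ i, Fin (d i)) → ℂ) : Prop :=
  ∑ x, ‖ψ x‖ ^ 2 = 1

def IsLME {n : ℕ} (d : Fin n → ℕ) (ψ : (∀ i, Fin (d i)) → ℂ) : Prop :=
  Normalized ψ ∧ ∀ k, rhoK d ψ k = (1 / (d k : ℂ)) • 1

def LMEExists (n : ℕ) (d : Fin n → ℕ) : Prop := ∃ ψ, IsLME d ψ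

def Nfun {n : ℕ} (k : Fin n → ℕ) : ℤ :=
  ∑ S ∈ Finset.univ.powerset.filter (fun S : Finset (Fin n) => S.Nonempty),
    (-1 : ℤ) ^ (S.card + 1) * ((Finset.gcd S k : ℕ) : ℤ)

def Rfun {n : ℕ} (d : Fin n → ℕ) : ℤ :=
  (∏ i, (d i : ℤ)) - Nfun (fun i => (d i) ^ 2)

def Dfun {n : ℕ} (d : Fin n → ℕ) : ℤ :=
  (∏ i, (d i : ℤ)) - 1 - ∑ i, ((d i : ℤ) ^ 2 - 1)

/-- A unitary representation is irreducible if the only invariant subspaces are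
trivial. -/
def IsIrreducibleRep {m : ℕ} {H : Type*} [Group H]
    (u : H →* Matrix.unitaryGroup (Fin m) ℂ) : Prop :=
  ∀ W : Submodule ℂ (Fin m → ℂ),
    (∀ h : H, ∀ w ∈ W, Matrix.mulVec (u h : Matrix (Fin m) (Fin m) ℂ) w ∈ W) →
    W = ⊥ ∨ W = ⊤

lemma count_mult (L g : ℕ) (hL : 0 < L) (hg : g ∣ L) :
    ((Finset.range L).filter (fun x => L ∣ x * g)).card = g := by
  obtain ⟨m, rfl⟩ := hg
  have hg0 : 0 < g := Nat.pos_of_mul_pos_right hL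
  have hm0 : 0 < m := Nat.pos_of_mul_pos_left hL
  have : (Finset.range (g*m)).filter (fun x => g*m ∣ x * g) = (Finset.range g).image (fun t => t * m) := by
    ext x
    simp only [Finset.mem_filter, Finset.mem_range, Finset.mem_image]
    constructor
    · rintro ⟨h1, h2⟩
      rw [mul_comm x g] at h2
      obtain ⟨t, rfl⟩ := Nat.dvd_of_mul_dvd_mul_left hg0 h2
      refine ⟨t, ?_, by ring⟩
      by_contra h
      push Not at h
      nlinarith
    · rintro ⟨t, h1, rfl⟩
      refine ⟨by nlinarith, ⟨t, by ring⟩⟩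
  rw [this, Finset.card_image_of_injective, Finset.card_range]
  intro a b h
  exact Nat.eq_of_mul_eq_mul_right hm0 h

lemma dvd_mul_gcd {n : ℕ} (k : Fin n → ℕ) (S : Finset (Fin n)) (L x : ℕ) :
    L ∣ x * S.gcd k ↔ ∀ i ∈ S, L ∣ x * k i := by
  rw [← Finset.dvd_gcd_iff, Finset.gcd_mul_left]; simp

lemma N_le {n : ℕ} (k : Fin n → ℕ) (hk : ∀ i, 0 < k i) (T : Finset (Fin n))
    (hT : ∀ i, ∃ j ∈ T, k i ∣ k j) : Nfun k ≤ 1 + ∑ j ∈ T, ((k j : ℤ) - 1) := by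
  classical
  set L := ∏ i, k i with hLdef
  have hL : 0 < L := Finset.prod_pos (fun i _ => hk i)
  have hkL : ∀ i, k i ∣ L := fun i => Finset.dvd_prod_of_mem k (Finset.mem_univ i)
  let A : Fin n → Finset ℕ := fun i => (Finset.range L).filter (fun x => L ∣ x * k i)
  have h1 : Nfun k = (((Finset.univ : Finset (Fin n)).biUnion A).card : ℤ) := by
    rw [Finset.inclusion_exclusion_card_biUnion, Nfun]
    rw [← Finset.sum_coe_sort]
    apply Finset.sum_congr rfl
    rintro ⟨S, hS⟩ -
    simp only
    congr 2
    have hSn : S.Nonempty := (Finset.mem_filter.1 hS).2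
    have hgL : S.gcd k ∣ L := by
      obtain ⟨i, hi⟩ := hSn
      exact (Finset.gcd_dvd hi).trans (hkL i)
    rw [← count_mult L _ hL hgL]
    congr 1
    ext x
    simp only [A, Finset.mem_filter, Finset.mem_range, dvd_mul_gcd, Finset.mem_inf']
    constructor
    · rintro ⟨h, h'⟩ i hi
      exact ⟨h, h' i hi⟩
    · intro h
      exact ⟨(h _ hSn.choose_spec).1, fun i hi => (h i hi).2⟩
  have h2 : (Finset.univ : Finset (Fin n)).biUnion A ⊆ {0} ∪ T.biUnion (fun j => (A j).erase 0) := by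
    intro x hx
    obtain ⟨i, -, hi⟩ := Finset.mem_biUnion.1 hx
    by_cases h0 : x = 0
    · simp [h0]
    obtain ⟨j, hj, hij⟩ := hT i
    apply Finset.mem_union_right
    refine Finset.mem_biUnion.2 ⟨j, hj, Finset.mem_erase.2 ⟨h0, ?_⟩⟩
    simp only [A, Finset.mem_filter] at hi ⊢
    exact ⟨hi.1, hi.2.trans (mul_dvd_mul_left x hij)⟩
  have h3 : ((Finset.univ : Finset (Fin n)).biUnion A).card ≤ 1 + ∑ j ∈ T, (k j - 1) := by
    refine (Finset.card_le_card h2).trans ((Finset.card_union_le _ _).trans ?_)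
    refine add_le_add (by simp) (Finset.card_biUnion_le.trans (Finset.sum_le_sum ?_))
    intro j _
    rw [Finset.card_erase_of_mem (by simp [A, hL]), count_mult L _ hL (hkL j)]
  rw [h1]
  have h4 : ((∑ j ∈ T, (k j - 1) : ℕ) : ℤ) = ∑ j ∈ T, ((k j : ℤ) - 1) := by
    push_cast
    exact Finset.sum_congr rfl (fun j _ => by rw [Nat.cast_sub (hk j)]; simp)
  rw [← h4]
  exact_mod_cast h3

lemma gcd_sq {n : ℕ} (d : Fin n → ℕ) (S : Finset (Fin n)) :
    S.gcd (fun i => d i ^ 2) = (S.gcd d) ^ 2 := by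
  classical
  induction S using Finset.induction with
  | empty => simp
  | insert a s h ih =>
    rw [Finset.gcd_insert, Finset.gcd_insert, ih]
    exact Nat.pow_gcd_pow 

lemma R_castle {n : ℕ} (d e : Fin n → ℕ) (k : Fin n) (h : ∀ i, i ≠ k → e i = d i)
    (hs : d k + e k = ∏ i ∈ Finset.univ.erase k, d i) : Rfun e = Rfun d := by
  classical
  have key : ∀ (d e : Fin n → ℕ), (∀ i, i ≠ k → e i = d i) → 
      (d k + e k = ∏ i ∈ Finset.univ.erase k, d i) → ∀ S : Finset (Fin n), S.Nonempty → S ≠ {k} → 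
      S.gcd d ∣ S.gcd e := by
    intro d e h hs S hS hSk
    apply Finset.dvd_gcd
    intro i hi
    by_cases hik : i = k
    · subst hik
      obtain ⟨j, hj, hji⟩ : ∃ j ∈ S, j ≠ i := by
        by_contra hc
        push Not at hc
        exact hSk (Finset.eq_singleton_iff_unique_mem.2 ⟨hi, hc⟩)
      refine (Nat.dvd_add_right (Finset.gcd_dvd hi)).1 ?_
      rw [hs]
      exact (Finset.gcd_dvd hj).trans (Finset.dvd_prod_of_mem d (by simp [hji]))
    · rw [h i hik]; exact Finset.gcd_dvd hi
  have hP : ∏ i ∈ Finset.univ.erase k, e i = ∏ i ∈ Finset.univ.erase k, d i :=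
    Finset.prod_congr rfl (fun i hi => h i (Finset.ne_of_mem_erase hi))
  have key2 : ∀ S : Finset (Fin n), S.Nonempty → S ≠ {k} → S.gcd d = S.gcd e := fun S h1 h2 =>
    Nat.dvd_antisymm (key d e h hs S h1 h2)
      (key e d (fun i hi => (h i hi).symm) (by rw [hP, ← hs, add_comm]) S h1 h2)
  have hN : Nfun (fun i => d i ^ 2) - Nfun (fun i => e i ^ 2) = (d k : ℤ)^2 - (e k : ℤ)^2 := by
    unfold Nfun
    rw [← Finset.sum_sub_distrib, Finset.sum_eq_single {k}]
    · simp
    · intro S hS hSk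
      have hSn : S.Nonempty := (Finset.mem_filter.1 hS).2
      rw [gcd_sq, gcd_sq, key2 S hSn hSk, sub_self]
    · intro h; exact absurd (by simp) h
  unfold Rfun
  rw [← Finset.mul_prod_erase _ _ (Finset.mem_univ k), ← Finset.mul_prod_erase _ (fun i => (d i : ℤ)) (Finset.mem_univ k)]
  have hP1 : (∏ i ∈ Finset.univ.erase k, (e i : ℤ)) = d k + e k := by exact_mod_cast hP.trans hs.symm
  have hP2 : (∏ i ∈ Finset.univ.erase k, (d i : ℤ)) = d k + e k := by exact_mod_cast hs.symm
  rw [hP1, hP2]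
  linarith

lemma sum_le_prod {n : ℕ} (d : Fin n → ℕ) (hd : ∀ i, 1 ≤ d i) (B : Finset (Fin n)) :
    1 ≤ ∏ i ∈ B, (d i : ℤ) ∧ ∑ i ∈ B, ((d i : ℤ) - 1) ≤ ∏ i ∈ B, (d i : ℤ) - 1 := by
  classical
  induction B using Finset.induction with
  | empty => simp
  | insert a s h ih =>
    rw [Finset.prod_insert h, Finset.sum_insert h]
    have h1 : (1 : ℤ) ≤ d a := by exact_mod_cast hd a
    obtain ⟨h2, h3⟩ := ih
    constructor
    · nlinarith
    · nlinarith

lemma R_numeric {n : ℕ} (d : Fin n → ℕ) (hd : ∀ i, 1 ≤ d i)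
    (h : ∀ k, 2 * d k ≤ ∏ i ∈ Finset.univ.erase k, d i) : 0 ≤ Rfun d := by
  classical
  rcases Nat.eq_zero_or_pos n with rfl | hn
  · simp [Rfun, Nfun, Finset.filter_singleton]
  obtain ⟨k, -, hk⟩ := Finset.exists_max_image (Finset.univ : Finset (Fin n)) d ⟨⟨0, hn⟩, by simp⟩
  have hne : (Finset.univ.erase k).Nonempty := by
    by_contra hc
    rw [Finset.not_nonempty_iff_eq_empty] at hc
    have := h k
    rw [hc] at this
    have := hd k
    simp at *
    omega
  obtain ⟨j, hj, hjm⟩ := Finset.exists_max_image (Finset.univ.erase k) d hne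
  set B := (Finset.univ.erase k).erase j with hB
  have hc2 := h k
  rw [← Finset.mul_prod_erase _ _ hj, ← hB] at hc2
  have hac := hk j (Finset.mem_univ j)
  obtain ⟨hq1, hs⟩ := sum_le_prod d hd B
  have hsB : ∑ i ∈ B, ((d i : ℤ)^2 - 1) ≤ (d j + 1) * (∏ i ∈ B, (d i : ℤ) - 1) := by
    calc ∑ i ∈ B, ((d i : ℤ)^2 - 1) ≤ ∑ i ∈ B, ((d j : ℤ) + 1) * ((d i : ℤ) - 1) := by
          apply Finset.sum_le_sum
          intro i hi
          have h1 : (1 : ℤ) ≤ d i := by exact_mod_cast hd i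
          have h2 : (d i : ℤ) ≤ d j := by exact_mod_cast hjm i (Finset.mem_of_mem_erase hi)
          nlinarith
      _ ≤ _ := by
          rw [← Finset.mul_sum]
          exact mul_le_mul_of_nonneg_left hs (by positivity)
  have hprod : ∏ i, (d i : ℤ) = d k * (d j * ∏ i ∈ B, (d i : ℤ)) := by
    rw [← Finset.mul_prod_erase _ _ (Finset.mem_univ k), ← Finset.mul_prod_erase _ _ hj]
  have h3 : ∏ i ∈ B, (d i : ℤ) = 3 → 3 ≤ d j := by
    intro h
    have h' : ∏ i ∈ B, d i = 3 := by exact_mod_cast h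
    obtain ⟨i, hi, hi3⟩ := (Nat.prime_three.prime.dvd_finsetProd_iff d).1 (dvd_of_eq h'.symm)
    exact (Nat.le_of_dvd (hd i) hi3).trans (hjm i (Finset.mem_of_mem_erase hi))
  have h1 : d j = 1 → ∏ i ∈ B, (d i : ℤ) = 1 := by
    intro h
    apply Finset.prod_eq_one
    intro i hi
    have := hjm i (Finset.mem_of_mem_erase hi)
    have := hd i
    have : d i = 1 := by omega
    simp [this]
  have hkpos : ∀ i, 0 < d i ^ 2 := fun i => by have := hd i; positivity
  have hjk : j ≠ k := Finset.ne_of_mem_erase hj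
  unfold Rfun
  rw [hprod]
  have hN1 := N_le (fun i => d i ^ 2) hkpos Finset.univ (fun i => ⟨i, by simp, dvd_rfl⟩)
  rw [← Finset.add_sum_erase _ _ (Finset.mem_univ k), ← Finset.add_sum_erase _ _ hj, ← hB] at hN1
  have hN2 : d j = d k → Nfun (fun i => d i ^ 2) ≤ 1 + (((d j : ℤ)^2 - 1) + ∑ i ∈ B, ((d i : ℤ)^2 - 1)) := by
    intro h
    have hN2 := N_le (fun i => d i ^ 2) hkpos (Finset.univ.erase k) (fun i => by
      by_cases hik : i = k
      · exact ⟨j, hj, by rw [hik, h]⟩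
      · exact ⟨i, by simp [hik], dvd_rfl⟩)
    rw [← Finset.add_sum_erase _ _ hj, ← hB] at hN2
    push_cast at hN2
    exact hN2
  push_cast at hN1
  have haz : (1 : ℤ) ≤ d j := by exact_mod_cast hd j
  have hacz : (d j : ℤ) ≤ d k := by exact_mod_cast hac
  have hc2z : 2 * (d k : ℤ) ≤ d j * ∏ i ∈ B, (d i : ℤ) := by exact_mod_cast hc2
  have h1z : (d j : ℤ) = 1 → ∏ i ∈ B, (d i : ℤ) = 1 := fun h => h1 (by exact_mod_cast h)
  have h3z : ∏ i ∈ B, (d i : ℤ) = 3 → (3 : ℤ) ≤ d j := fun h => by exact_mod_cast h3 h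
  have hN2z : (d j : ℤ) = d k → _ := fun h => hN2 (by exact_mod_cast h)
  generalize ∏ i ∈ B, (d i : ℤ) = q at *
  generalize ∑ i ∈ B, ((d i : ℤ)^2 - 1) = s at *
  generalize Nfun (fun i => d i ^ 2) = N at *
  generalize (d j : ℤ) = a at *
  generalize (d k : ℤ) = c at *
  clear * - haz hacz hc2z h1z h3z hN2z hN1 hsB hq1
  have ha2 : 2 ≤ a := by
    by_contra hh
    have : a = 1 := by omega
    have := h1z this
    subst this
    linarith
  have hq2 : 2 ≤ q := by
    by_contra hh
    have : q = 1 := by omega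
    subst this
    linarith
  rcases eq_or_lt_of_le hq2 with hq | hq
  · subst hq
    have : a = c := by linarith
    have := hN2z this
    subst c
    nlinarith
  · have hkey : (a + 1) * (q - 1) ≤ a^2 * (q - 2) + 1 := by
      rcases eq_or_lt_of_le ha2 with h2 | h2
      · subst h2
        have : q ≠ 3 := fun h => by linarith [h3z h]
        have : 4 ≤ q := by omega
        linarith
      · obtain ⟨r, rfl⟩ : ∃ r, q = r + 3 := ⟨q - 3, by ring⟩
        have hr : 0 ≤ r := by linarith
        have : 0 ≤ r * (a^2 - a - 1) := mul_nonneg hr (by nlinarith)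
        nlinarith
    have h5 : 0 ≤ (c - a) * (q * a - 2 * c) := mul_nonneg (by linarith) (by linarith)
    have h6 : 0 ≤ (c - a) * a * (q - 2) := mul_nonneg (mul_nonneg (by linarith) (by linarith)) (by linarith)
    nlinarith

lemma completion {β : Type*} [DecidableEq β] (B : Finset β) (v : ℕ → β → ℂ) (c : ℝ) (hc : 0 < c) (m : ℕ)
    (hv : ∀ a < m, ∀ b < m, ∑ z ∈ B, v a z * conj (v b z) = if a = b then (c : ℂ) else 0) :
    m ≤ B.card ∧ ∃ w : ℕ → β → ℂ,
      (∀ a < B.card - m, ∀ b < B.card - m,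
        ∑ z ∈ B, w a z * conj (w b z) = if a = b then 1 else 0) ∧
      (∀ z ∈ B, ∀ z' ∈ B, (1 / (c : ℂ)) * ∑ t ∈ Finset.range m, v t z * conj (v t z') +
        ∑ t ∈ Finset.range (B.card - m), w t z * conj (w t z') = if z = z' then 1 else 0) := by
  classical
  let s : ℂ := ((Real.sqrt c)⁻¹ : ℝ)
  have hss : s * conj s = 1 / (c : ℂ) := by
    simp only [s, Complex.conj_ofReal]
    rw [← Complex.ofReal_mul, ← mul_inv, Real.mul_self_sqrt hc.le]
    simp
  let V : ℕ → EuclideanSpace ℂ B := fun a => WithLp.toLp 2 (fun z => s * v a z)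
  have hVin : ∀ a < m, ∀ b < m, inner ℂ (V a) (V b) = if a = b then (1 : ℂ) else 0 := by
    intro a ha b hb
    have : inner ℂ (V a) (V b) = (1 / (c : ℂ)) * ∑ z ∈ B, v b z * conj (v a z) := by
      rw [← hss, ← Finset.sum_coe_sort B, PiLp.inner_apply, Finset.mul_sum]
      apply Finset.sum_congr rfl
      intro z _
      simp [V]
      ring
    rw [this, hv b hb a ha]
    by_cases h : a = b
    · subst h; simp [hc.ne']
    · simp [h, Ne.symm h]
  have hVm : Orthonormal ℂ (fun a : Fin m => V a) := by
    rw [orthonormal_iff_ite]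
    intro i j
    rw [hVin i i.2 j j.2]
    simp [Fin.ext_iff]
  have hfr : Module.finrank ℂ (EuclideanSpace ℂ B) = B.card := by simp
  have hmB : m ≤ B.card := by
    have := hVm.linearIndependent.fintype_card_le_finrank
    rwa [hfr, Fintype.card_fin] at this
  refine ⟨hmB, ?_⟩
  have hVs : Orthonormal ℂ (({i : Fin B.card | i.1 < m} : Set (Fin B.card)).domRestrict (fun i => V i.1)) := by
    rw [orthonormal_iff_ite]
    rintro ⟨i, hi⟩ ⟨j, hj⟩
    have := hVin i hi j hj
    simp only [Set.domRestrict_apply]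
    rw [this]
    simp [Fin.ext_iff]
  obtain ⟨b, hb⟩ := hVs.exists_orthonormalBasis_extension_of_card_eq (by rw [hfr]; simp)
  let f : ℕ → β → ℂ := fun i z => if h : i < B.card ∧ z ∈ B then b ⟨i, h.1⟩ ⟨z, h.2⟩ else 0
  have hf : ∀ (i : Fin B.card) (z : B), f i z = b i z := by
    intro i z
    simp [f]
  have hfv : ∀ i < m, ∀ z ∈ B, f i z = s * v i z := by
    intro i hi z hz
    have := hf ⟨i, hi.trans_le hmB⟩ ⟨z, hz⟩
    simp only at this
    rw [this, hb _ hi]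
  have hfo : ∀ i < B.card, ∀ j < B.card, ∑ z ∈ B, f i z * conj (f j z) = if i = j then 1 else 0 := by
    intro i hi j hj
    have h := orthonormal_iff_ite.1 b.orthonormal ⟨j, hj⟩ ⟨i, hi⟩
    rw [PiLp.inner_apply] at h
    rw [← Finset.sum_coe_sort B]
    have h2 : ∀ z : B, f i z * conj (f j z) = inner ℂ (b ⟨j, hj⟩ z) (b ⟨i, hi⟩ z) := by
      intro z
      rw [← hf, ← hf]
      simp
    rw [Finset.sum_congr rfl (fun z _ => h2 z), h]
    simp [eq_comm]
  have hfc : ∀ z ∈ B, ∀ z' ∈ B, ∑ t ∈ Finset.range B.card, f t z * conj (f t z') = if z = z' then 1 else 0 := by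
    intro z hz z' hz'
    have h := b.sum_inner_mul_inner (EuclideanSpace.single ⟨z, hz⟩ 1) (EuclideanSpace.single ⟨z', hz'⟩ 1)
    rw [← Fin.sum_univ_eq_sum_range (fun t => f t z * conj (f t z'))]
    have h2 : ∀ t : Fin B.card, f t z * conj (f t z') =
       inner ℂ (EuclideanSpace.single (⟨z, hz⟩ : B) (1:ℂ)) (b t) * inner ℂ (b t) (EuclideanSpace.single ⟨z', hz'⟩ 1) := by
      intro t
      rw [EuclideanSpace.inner_single_left, EuclideanSpace.inner_single_right, ← hf, ← hf]
      simp
    rw [Finset.sum_congr rfl (fun z _ => h2 z), h]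
    simp [EuclideanSpace.inner_single_left]
  refine ⟨fun t => f (m + t), ?_, ?_⟩
  · intro a ha b hb
    rw [hfo _ (by omega) _ (by omega)]
    simp
  · intro z hz z' hz'
    rw [← hfc z hz z' hz']
    conv_rhs => rw [show B.card = m + (B.card - m) by omega]
    rw [Finset.sum_range_add, Finset.mul_sum]
    congr 1
    apply Finset.sum_congr rfl
    intro t ht
    rw [hfv t (Finset.mem_range.1 ht) z hz, hfv t (Finset.mem_range.1 ht) z' hz', ← hss, map_mul]
    ring

def box {n : ℕ} (d : Fin n → ℕ) : Finset (Fin n → ℕ) := Fintype.piFinset (fun i => Finset.range (d i))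

lemma mem_box {n : ℕ} {d : Fin n → ℕ} {x : Fin n → ℕ} : x ∈ box d ↔ ∀ i, x i < d i := by
  simp [box]

def Qf {n : ℕ} (d : Fin n → ℕ) (Ψ : (Fin n → ℕ) → ℂ) (k : Fin n) (a b : ℕ) : ℂ :=
  ∑ x ∈ box (Function.update d k 1), Ψ (Function.update x k a) * conj (Ψ (Function.update x k b))

def LM {n : ℕ} (d : Fin n → ℕ) (Ψ : (Fin n → ℕ) → ℂ) : Prop :=
  (∃ x ∈ box d, Ψ x ≠ 0) ∧ ∀ k, ∃ c : ℂ, ∀ a < d k, ∀ b < d k, Qf d Ψ k a b = if a = b then c else 0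

lemma box_card {n : ℕ} (d : Fin n → ℕ) (k : Fin n) :
    (box (Function.update d k 1)).card = ∏ i ∈ Finset.univ.erase k, d i := by
  rw [box, Fintype.card_piFinset, ← Finset.mul_prod_erase _ _ (Finset.mem_univ k)]
  simp only [Finset.card_range, Function.update_self, one_mul]
  exact Finset.prod_congr rfl (fun i hi => by rw [Function.update_of_ne (Finset.ne_of_mem_erase hi)])

lemma box_update_mem {n : ℕ} {d : Fin n → ℕ} {k : Fin n} {x : Fin n → ℕ} {m a : ℕ} (e : ℕ)
    (hx : x ∈ box (Function.update d k m)) (ha : a < e) :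
    Function.update x k a ∈ box (Function.update d k e) := by
  rw [mem_box] at *
  intro i
  by_cases h : i = k
  · subst h; simpa
  · have := hx i
    simpa [h] using this

lemma box_split {n : ℕ} (d : Fin n → ℕ) (k : Fin n) (F : (Fin n → ℕ) → ℂ) :
    ∑ x ∈ box d, F x = ∑ y ∈ box (Function.update d k 1), ∑ t ∈ Finset.range (d k), F (Function.update y k t) := by
  rw [← Finset.sum_product']
  symm
  refine Finset.sum_nbij' (fun p => Function.update p.1 k p.2) (fun x => (Function.update x k 0, x k)) ?_ ?_ ?_ ?_ ?_
  · rintro ⟨y, t⟩ h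
    rw [Finset.mem_product, Finset.mem_range] at h
    have := box_update_mem (d k) h.1 h.2
    simpa using this
  · intro x hx
    rw [Finset.mem_product, Finset.mem_range]
    refine ⟨box_update_mem (m := d k) 1 (by simpa using hx) one_pos, mem_box.1 hx k⟩
  · rintro ⟨y, t⟩ h
    rw [Finset.mem_product] at h
    have h0 := mem_box.1 h.1 k
    simp only [Function.update_self, Nat.lt_one_iff] at h0
    simp only [Function.update_idem, Function.update_self, Prod.mk.injEq, and_true]
    rw [← h0, Function.update_eq_self]
  · intro x hx
    simp
  · intro p _
    rfl

lemma Q_pos {n : ℕ} {d : Fin n → ℕ} {Ψ : (Fin n → ℕ) → ℂ} (h : LM d Ψ) (k : Fin n) :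
    ∃ c : ℝ, 0 < c ∧ ∀ a < d k, ∀ b < d k, Qf d Ψ k a b = if a = b then (c : ℂ) else 0 := by
  obtain ⟨⟨x, hx, hx0⟩, h⟩ := h
  obtain ⟨c, hc⟩ := h k
  have hxk := mem_box.1 hx k
  have h1 := hc (x k) hxk (x k) hxk
  rw [if_pos rfl] at h1
  have h2 : Qf d Ψ k (x k) (x k) =
      ((∑ y ∈ box (Function.update d k 1), Complex.normSq (Ψ (Function.update y k (x k))) : ℝ) : ℂ) := by
    rw [Qf, Complex.ofReal_sum]
    exact Finset.sum_congr rfl (fun y _ => by rw [Complex.mul_conj])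
  refine ⟨∑ y ∈ box (Function.update d k 1), Complex.normSq (Ψ (Function.update y k (x k))), ?_,
    fun a ha b hb => ?_⟩
  rotate_left
  · rw [hc a ha b hb, ← h1, h2]
  · refine Finset.sum_pos' (fun y _ => Complex.normSq_nonneg _) ⟨Function.update x k 0,
      box_update_mem (m := d k) 1 (by simpa using hx) one_pos, ?_⟩
    simp [hx0]

lemma Q_split {n : ℕ} (d : Fin n → ℕ) (Ψ : (Fin n → ℕ) → ℂ) (j k : Fin n) (hjk : j ≠ k) (a b : ℕ) :
    Qf d Ψ j a b = ∑ y ∈ box (Function.update (Function.update d j 1) k 1), ∑ t ∈ Finset.range (d k),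
      Ψ (Function.update (Function.update y j a) k t) * conj (Ψ (Function.update (Function.update y j b) k t)) := by
  rw [Qf, box_split _ k]
  rw [Function.update_of_ne hjk.symm]
  refine Finset.sum_congr rfl (fun y _ => Finset.sum_congr rfl (fun t _ => ?_))
  rw [Function.update_comm hjk, Function.update_comm hjk]

lemma castle {n : ℕ} (d : Fin n → ℕ) (Ψ : (Fin n → ℕ) → ℂ) (h : LM d Ψ) (k : Fin n) :
    d k ≤ ∏ i ∈ Finset.univ.erase k, d i ∧ (d k < ∏ i ∈ Finset.univ.erase k, d i → ∃ Ψ',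
      LM (Function.update d k ((∏ i ∈ Finset.univ.erase k, d i) - d k)) Ψ') := by
  classical
  obtain ⟨c, hc, hQ⟩ := Q_pos h k
  obtain ⟨h1, w, hw, hvw⟩ := completion (box (Function.update d k 1))
    (fun t z => Ψ (Function.update z k t)) c hc (d k) hQ
  rw [box_card] at h1 hw hvw
  refine ⟨h1, fun hlt => ?_⟩
  set P := ∏ i ∈ Finset.univ.erase k, d i
  set e := Function.update d k (P - d k) with he
  have hek : e k = P - d k := by simp [he]
  let Ψ' : (Fin n → ℕ) → ℂ := fun x => w (x k) (Function.update x k 0)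
  have hΨ' : ∀ z ∈ box (Function.update d k 1), ∀ t, Ψ' (Function.update z k t) = w t z := by
    intro z hz t
    have h0 := mem_box.1 hz k
    simp only [Function.update_self, Nat.lt_one_iff] at h0
    simp only [Ψ', Function.update_self, Function.update_idem]
    rw [← h0, Function.update_eq_self]
  have hek1 : Function.update e k 1 = Function.update d k 1 := by simp [he]
  have hQk : ∀ a < e k, ∀ b < e k, Qf e Ψ' k a b = if a = b then 1 else 0 := by
    intro a ha b hb
    rw [hek] at ha hb
    rw [← hw a ha b hb, Qf, hek1]
    exact Finset.sum_congr rfl (fun z hz => by rw [hΨ' z hz, hΨ' z hz])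
  refine ⟨Ψ', ?_, ?_⟩
  · by_contra hcon
    push Not at hcon
    have h0 : 0 < e k := by omega
    have := hQk 0 h0 0 h0
    rw [if_pos rfl, Qf, Finset.sum_eq_zero] at this
    · exact zero_ne_one this
    · intro z hz
      have := box_update_mem (e k) hz h0
      rw [Function.update_eq_self] at this
      rw [hcon _ this, zero_mul]
  · intro j
    by_cases hjk : j = k
    · subst hjk
      exact ⟨1, hQk⟩
    · obtain ⟨cj, hcj⟩ := h.2 j
      have hej : e j = d j := by simp [he, hjk]
      refine ⟨(box (Function.update (Function.update d j 1) k 1)).card - (1 / (c : ℂ)) * cj, ?_⟩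
      intro a ha b hb
      rw [hej] at ha hb
      have hq := hcj a ha b hb
      rw [Q_split _ _ j k hjk] at hq
      have hbox : Function.update (Function.update e j 1) k 1 = Function.update (Function.update d j 1) k 1 := by
        rw [Function.update_comm hjk, hek1, Function.update_comm hjk]
      have hmem : ∀ a < d j, ∀ y ∈ box (Function.update (Function.update d j 1) k 1),
          Function.update y j a ∈ box (Function.update d k 1) := by
        intro a ha y hy
        rw [Function.update_comm hjk] at hy
        have := box_update_mem (d j) hy ha
        convert this using 2
        rw [eq_comm, Function.update_eq_self_iff, Function.update_of_ne hjk]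
      have hkey : (1 / (c : ℂ)) * (if a = b then cj else 0) + Qf e Ψ' j a b =
          ∑ y ∈ box (Function.update (Function.update d j 1) k 1), if a = b then (1:ℂ) else 0 := by
        rw [← hq, Q_split _ _ j k hjk, hbox, Finset.mul_sum, ← Finset.sum_add_distrib]
        apply Finset.sum_congr rfl
        intro y hy
        have h2 := hvw _ (hmem a ha y hy) _ (hmem b hb y hy)
        have h3 : (Function.update y j a = Function.update y j b) ↔ a = b :=
          (Function.update_injective y j).eq_iff
        simp only [h3] at h2
        rw [← h2, hek]
        congr 1
        exact Finset.sum_congr rfl (fun t _ => by rw [hΨ' _ (hmem a ha y hy), hΨ' _ (hmem b hb y hy)])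
      by_cases hab : a = b
      · simp only [hab, if_true] at hkey ⊢
        simp only [Finset.sum_const, nsmul_eq_mul, mul_one] at hkey
        rw [← hkey]; ring
      · simpa [hab] using hkey

lemma LM_R {n : ℕ} (s : ℕ) : ∀ (d : Fin n → ℕ) (_ : ∀ i, 1 ≤ d i) (_ : ∑ i, d i = s) (Ψ : (Fin n → ℕ) → ℂ)
    (_ : LM d Ψ), 0 ≤ Rfun d := by
  classical
  induction s using Nat.strong_induction_on with
  | _ s ih =>
  intro d hd hs Ψ h
  by_cases hk : ∀ k, 2 * d k ≤ ∏ i ∈ Finset.univ.erase k, d i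
  · exact R_numeric d hd hk
  push Not at hk
  obtain ⟨k, hk⟩ := hk
  obtain ⟨h1, h2⟩ := castle d Ψ h k
  rcases eq_or_lt_of_le h1 with heq | hlt
  · have hN := N_le (fun i => d i ^ 2) (fun i => by have := hd i; positivity) {k} (fun i => ⟨k, by simp, by
      by_cases hik : i = k
      · rw [hik]
      · apply pow_dvd_pow_of_dvd
        rw [heq]
        exact Finset.dvd_prod_of_mem d (by simp [hik])⟩)
    simp only [Finset.sum_singleton] at hN
    push_cast at hN
    unfold Rfun
    rw [← Finset.mul_prod_erase _ _ (Finset.mem_univ k)]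
    have : ∏ i ∈ Finset.univ.erase k, (d i : ℤ) = d k := by exact_mod_cast heq.symm
    rw [this]
    nlinarith
  · obtain ⟨Ψ', h'⟩ := h2 hlt
    have hR := R_castle d (Function.update d k ((∏ i ∈ Finset.univ.erase k, d i) - d k)) k
      (fun i hi => by simp [hi]) (by simp; omega)
    rw [← hR]
    refine ih _ ?_ _ ?_ rfl Ψ' h'
    · rw [← hs]
      apply Finset.sum_lt_sum
      · intro i _
        by_cases hik : i = k
        · subst hik; simp; omega
        · simp [hik]
      · exact ⟨k, by simp, by simp; omega⟩
    · intro i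
      by_cases hik : i = k
      · subst hik; simp; omega
      · simp [hik, hd i]

def TT {n : ℕ} {d : Fin n → ℕ} (A : ∀ i, Matrix (Fin (d i)) (Fin (d i)) ℂ) :
    Matrix (∀ i, Fin (d i)) (∀ i, Fin (d i)) ℂ :=
  Matrix.of fun x y => ∏ i, A i (x i) (y i)

lemma TT_mul {n : ℕ} {d : Fin n → ℕ} (A B : ∀ i, Matrix (Fin (d i)) (Fin (d i)) ℂ) :
    TT A * TT B = TT (fun i => A i * B i) := by
  ext x y
  simp only [TT, Matrix.mul_apply, Matrix.of_apply, Fintype.prod_sum, ← Finset.prod_mul_distrib]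

lemma TT_conjTranspose {n : ℕ} {d : Fin n → ℕ} (A : ∀ i, Matrix (Fin (d i)) (Fin (d i)) ℂ) :
    (TT A).conjTranspose = TT (fun i => (A i).conjTranspose) := by
  ext x y
  simp [TT, Matrix.conjTranspose_apply]

/-- expectation value of a one-site operator -/
def ev {n : ℕ} {d : Fin n → ℕ} (ψ : (∀ i, Fin (d i)) → ℂ) (k : Fin n)
    (X : Matrix (Fin (d k)) (Fin (d k)) ℂ) : ℂ :=
  star ψ ⬝ᵥ ((TT (Function.update (fun i => (1 : Matrix (Fin (d i)) (Fin (d i)) ℂ)) k X)).mulVec ψ)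

lemma TT_update {n : ℕ} {d : Fin n → ℕ} (k : Fin n) (X : Matrix (Fin (d k)) (Fin (d k)) ℂ)
    (x y : ∀ i, Fin (d i)) :
    TT (Function.update (fun i => (1 : Matrix (Fin (d i)) (Fin (d i)) ℂ)) k X) x y =
      ∑ l, if y = Function.update x k l then X (x k) l else 0 := by
  simp only [TT, Matrix.of_apply]
  rw [← Finset.mul_prod_erase _ _ (Finset.mem_univ k), Function.update_self]
  by_cases h : y = Function.update x k (y k)
  · rw [Finset.prod_eq_one, mul_one, Finset.sum_eq_single (y k)]
    · rw [if_pos h]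
    · intro l _ hl
      rw [if_neg]
      intro h'
      apply hl
      rw [h']; simp
    · simp
    · intro i hi
      have hik := Finset.ne_of_mem_erase hi
      rw [Function.update_of_ne hik, h, Function.update_of_ne hik, Matrix.one_apply_eq]
  · obtain ⟨i, hik, hi⟩ : ∃ i, i ≠ k ∧ y i ≠ x i := by
      by_contra hc
      push Not at hc
      apply h
      ext i
      by_cases hik : i = k
      · subst hik; simp
      · rw [Function.update_of_ne hik, hc i hik]
    rw [Finset.prod_eq_zero (i := i) (by simp [hik]) (by
      rw [Function.update_of_ne hik, Matrix.one_apply_ne hi.symm]), mul_zero, Finset.sum_eq_zero]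
    intro l _
    rw [if_neg]
    intro h'
    apply hi
    rw [h', Function.update_of_ne hik]

lemma ev_eq {n : ℕ} {d : Fin n → ℕ} (ψ : (∀ i, Fin (d i)) → ℂ) (k : Fin n)
    (X : Matrix (Fin (d k)) (Fin (d k)) ℂ) :
    ev ψ k X = ∑ x, ∑ l, X (x k) l * (conj (ψ x) * ψ (Function.update x k l)) := by
  simp only [ev, dotProduct, Matrix.mulVec, TT_update]
  apply Finset.sum_congr rfl
  intro x _
  simp only [Finset.sum_mul]
  rw [Finset.sum_comm, Finset.mul_sum]
  apply Finset.sum_congr rfl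
  intro l _
  simp only [ite_mul, zero_mul]
  rw [Finset.sum_ite_eq' Finset.univ]
  simp
  ring

/-- reduced matrix -/
def rho {n : ℕ} {d : Fin n → ℕ} (ψ : (∀ i, Fin (d i)) → ℂ) (k : Fin n) :
    Matrix (Fin (d k)) (Fin (d k)) ℂ :=
  Matrix.of fun l j => ∑ x, if x k = j then conj (ψ x) * ψ (Function.update x k l) else 0

lemma ev_trace {n : ℕ} {d : Fin n → ℕ} (ψ : (∀ i, Fin (d i)) → ℂ) (k : Fin n)
    (X : Matrix (Fin (d k)) (Fin (d k)) ℂ) : ev ψ k X = (X * rho ψ k).trace := by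
  rw [ev_eq]
  simp only [Matrix.trace, Matrix.diag, Matrix.mul_apply, rho, Matrix.of_apply, Finset.mul_sum]
  rw [Finset.sum_comm]
  conv_rhs => rw [Finset.sum_comm]
  apply Finset.sum_congr rfl
  intro l _
  rw [Finset.sum_comm]
  apply Finset.sum_congr rfl
  intro x _
  simp

lemma ev_inv {n : ℕ} {d : Fin n → ℕ} (ψ : (∀ i, Fin (d i)) → ℂ) (k : Fin n)
    (U : ∀ i, Matrix (Fin (d i)) (Fin (d i)) ℂ) (hU : ∀ i, (U i).conjTranspose * U i = 1)
    (hψ : (TT U).mulVec ψ = ψ) (X : Matrix (Fin (d k)) (Fin (d k)) ℂ) :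
    ev ψ k ((U k).conjTranspose * X * U k) = ev ψ k X := by
  have h1 : TT (Function.update (fun i => (1 : Matrix (Fin (d i)) (Fin (d i)) ℂ)) k
      ((U k).conjTranspose * X * U k)) = (TT U).conjTranspose *
      TT (Function.update (fun i => (1 : Matrix (Fin (d i)) (Fin (d i)) ℂ)) k X) * TT U := by
    rw [TT_conjTranspose, TT_mul, TT_mul]
    congr 1
    funext i
    by_cases h : i = k
    · subst h; simp
    · simp [h, hU i]
  rw [ev, h1, ← Matrix.mulVec_mulVec, ← Matrix.mulVec_mulVec, hψ, Matrix.dotProduct_mulVec,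
    ← Matrix.star_mulVec, hψ]
  rfl

lemma schur {m : ℕ} (hm : 1 ≤ m) {H : Type*} [Group H] (u : H →* Matrix.unitaryGroup (Fin m) ℂ)
    (hirr : IsIrreducibleRep u) (ρ : Matrix (Fin m) (Fin m) ℂ)
    (hc : ∀ h, (u h : Matrix (Fin m) (Fin m) ℂ) * ρ = ρ * (u h : Matrix (Fin m) (Fin m) ℂ)) :
    ∃ c : ℂ, ρ = c • 1 := by
  haveI : Nonempty (Fin m) := ⟨⟨0, hm⟩⟩
  obtain ⟨c, hc'⟩ := Module.End.exists_eigenvalue (Matrix.toLin' ρ)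
  refine ⟨c, ?_⟩
  have := hirr (Module.End.eigenspace (Matrix.toLin' ρ) c) (by
    intro h w hw
    rw [Module.End.mem_eigenspace_iff, Matrix.toLin'_apply] at hw ⊢
    rw [Matrix.mulVec_mulVec, ← hc h, ← Matrix.mulVec_mulVec, hw, Matrix.mulVec_smul])
  rcases this with h | h
  · exact absurd h hc'
  · apply Matrix.toLin'.injective
    ext1 i
    have : (Pi.single i 1 : Fin m → ℂ) ∈ Module.End.eigenspace (Matrix.toLin' ρ) c := by rw [h]; trivial
    rw [Module.End.mem_eigenspace_iff] at this
    ext j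
    simp only [LinearMap.comp_apply, LinearMap.coe_single, this]
    simp

lemma rho_scalar {n : ℕ} {d : Fin n → ℕ} (hd : ∀ i, 1 ≤ d i)
    {H : Type*} [Group H]
    (u : ∀ i : Fin n, H →* Matrix.unitaryGroup (Fin (d i)) ℂ)
    (hirr : ∀ i, IsIrreducibleRep (u i)) (ψ : (∀ i, Fin (d i)) → ℂ)
    (hψ : ∀ h : H, (TT (fun i => (u i h : Matrix (Fin (d i)) (Fin (d i)) ℂ))).mulVec ψ = ψ) (k : Fin n) :
    ∃ c : ℂ, rho ψ k = c • 1 := by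
  apply schur (hd k) (u k) (hirr k)
  intro h
  set U : Matrix (Fin (d k)) (Fin (d k)) ℂ := (u k h : Matrix (Fin (d k)) (Fin (d k)) ℂ) with hUdef
  have hu : ∀ i, (u i h : Matrix (Fin (d i)) (Fin (d i)) ℂ).conjTranspose * (u i h : Matrix (Fin (d i)) (Fin (d i)) ℂ) = 1 :=
    fun i => Matrix.mem_unitaryGroup_iff'.1 (u i h).2
  have h1 : ∀ X, (X * (U * rho ψ k * U.conjTranspose)).trace = (X * rho ψ k).trace := by
    intro X
    rw [← ev_trace, ← ev_inv ψ k _ hu (hψ h) X, ev_trace, ← hUdef]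
    rw [← Matrix.mul_assoc, Matrix.trace_mul_comm]
    simp only [Matrix.mul_assoc]
  have h2 : U * rho ψ k * U.conjTranspose = rho ψ k := by
    ext a b
    have := h1 (Matrix.single b a 1)
    simpa [Matrix.trace_single_mul] using this
  calc U * rho ψ k = U * rho ψ k * (U.conjTranspose * U) := by rw [hu k, mul_one]
    _ = (U * rho ψ k * U.conjTranspose) * U := by simp only [Matrix.mul_assoc]
    _ = _ := by rw [h2]

def ext0 {n : ℕ} {d : Fin n → ℕ} (ψ : (∀ i, Fin (d i)) → ℂ) : (Fin n → ℕ) → ℂ := fun x =>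
  if h : ∀ i, x i < d i then ψ (fun i => ⟨x i, h i⟩) else 0

lemma ext0_coe {n : ℕ} {d : Fin n → ℕ} (ψ : (∀ i, Fin (d i)) → ℂ) (x : ∀ i, Fin (d i)) :
    ext0 ψ (fun i => (x i : ℕ)) = ψ x := by
  simp [ext0]

lemma Q_rho {n : ℕ} {d : Fin n → ℕ} (ψ : (∀ i, Fin (d i)) → ℂ) (k : Fin n) (a b : Fin (d k)) :
    Qf d (ext0 ψ) k a b = rho ψ k a b := by
  have hcu : ∀ (x : ∀ i, Fin (d i)) (l : Fin (d k)),
      (fun i => ((Function.update x k l i : Fin (d i)) : ℕ)) = Function.update (fun i => (x i : ℕ)) k (l : ℕ) := by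
    intro x l
    funext i
    by_cases h : i = k
    · subst h; simp
    · simp [h]
  rw [Qf, rho, Matrix.of_apply, ← Finset.sum_filter]
  symm
  refine Finset.sum_bij' (fun x _ => Function.update (fun i => (x i : ℕ)) k 0)
    (fun y hy => fun i => ⟨Function.update y k (b : ℕ) i, ?_⟩) ?_ ?_ ?_ ?_ ?_
  · have := box_update_mem (d k) hy b.2
    rw [Function.update_eq_self] at this
    exact mem_box.1 this i
  · intro x _
    refine box_update_mem (m := d k) 1 ?_ one_pos
    rw [Function.update_eq_self]
    exact mem_box.2 (fun i => (x i).2)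
  · intro y hy
    simp
  · intro x hx
    have hx' := (Finset.mem_filter.1 hx).2
    ext i
    by_cases h : i = k
    · subst h; simp [hx']
    · simp [h]
  · intro y hy
    have h0 := mem_box.1 hy k
    simp only [Function.update_self, Nat.lt_one_iff] at h0
    simp only [Function.update_idem]
    rw [← h0, Function.update_eq_self]
  · intro x hx
    have hx' := (Finset.mem_filter.1 hx).2
    rw [Function.update_idem, Function.update_idem, ← hcu, ← hcu, ext0_coe, ext0_coe, ← hx',
      Function.update_eq_self, mul_comm]

/-- if the tensor product of irreducible unitary representations
of dimensions d i contains a trivial subrepresentation, then R(d) ≥ 0. -/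
theorem invariant_vector_R_nonneg (n : ℕ) (d : Fin n → ℕ) (hd : ∀ i, 1 ≤ d i)
    (H : Type*) [Group H]
    (u : ∀ i : Fin n, H →* Matrix.unitaryGroup (Fin (d i)) ℂ)
    (hirr : ∀ i, IsIrreducibleRep (u i))
    (hex : ∃ ψ : (∀ i, Fin (d i)) → ℂ, ψ ≠ 0 ∧
      ∀ h : H, ∀ x : ∀ i, Fin (d i),
        ∑ y : ∀ i, Fin (d i),
          (∏ i, (u i h : Matrix (Fin (d i)) (Fin (d i)) ℂ) (x i) (y i)) * ψ y = ψ x) :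
    0 ≤ Rfun d := by
  obtain ⟨ψ, hψ0, hψ⟩ := hex
  refine LM_R _ d hd rfl (ext0 ψ) ⟨?_, ?_⟩
  · obtain ⟨x, hx⟩ := Function.ne_iff.1 hψ0
    exact ⟨fun i => (x i : ℕ), mem_box.2 (fun i => (x i).2), by rw [ext0_coe]; exact hx⟩
  · intro k
    obtain ⟨c, hc⟩ := rho_scalar hd u hirr ψ (fun h => funext (hψ h)) k
    refine ⟨c, fun a ha b hb => ?_⟩
    have := Q_rho ψ k ⟨a, ha⟩ ⟨b, hb⟩
    simp only at this
    rw [this, hc]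
    simp [Matrix.one_apply]
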